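/- Let 0 < α ≤ 1, let h > 0, let N ≥ 2 be an integer, let x_j = a + jh (j = 0,…,N), and let p, q, r be real-valued mesh functions with p(x_i) > 0 and r(x_i) > 0 for all i. If λ_i is an eigenvalue of the discrete fractional Sturm–Liouville problem ₖΔ^α_N(p(x_k)·₀Δ^α_k y(x_k)) + q(x_k) y(x_k) = λ r(x_k) y(x_k), k = 1,…,N−1, y(x_0) = y(x_N) = 0, with eigenfunction y^i, then the Rayleigh quotient of y^i equals λ_i: R[y^i] = J[y^i] / I[y^i] = λ_i. -/

import Mathlib

/-!
The backward and forward differences are adjoint to each other for the plain sum over the mesh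
points `0, …, N` (`sum_mul_glBackDiff`, a discrete fractional summation by parts). Hence, for an
eigenfunction `y`, `∑ p (Δy)² = ∑ y · Δ*(p Δy)`, and multiplying the equation by `y k` and summing
gives `J[y] = λ I[y]`; the equation is not available at `k = 0, N`, but `y` vanishes there.
Since `r > 0` and `y` is nontrivial, `I[y] > 0` and one may divide.
-/

/-- The Grünwald–Letnikov coefficients `a_i^{(α)} = (-1)^i α(α-1)⋯(α-i+1)/i!`
(with `a_0^{(α)} = 1`). -/
noncomputable def acoef (α : ℝ) (i : ℕ) : ℝ :=
  (-1 : ℝ) ^ i * (∏ j ∈ Finset.range i, (α - (j : ℝ))) / (Nat.factorial i)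

/-- The backward fractional difference of order `α` on a uniform mesh with step `h`,
of a mesh function `f` (where `f k` stands for `f(x_k)`, `x_k = a + k h`):
`₀Δ^α_k f(x_k) = h^{-α} Σ_{i=0}^{k} a_i^{(α)} f(x_{k-i})`. -/
noncomputable def glBackDiff (α h : ℝ) (f : ℕ → ℝ) (k : ℕ) : ℝ :=
  h ^ (-α) * ∑ i ∈ Finset.range (k + 1), acoef α i * f (k - i)

/-- The forward fractional difference of order `α` on a uniform mesh with step `h`
and `N + 1` mesh points: `ₖΔ^α_N f(x_k) = h^{-α} Σ_{i=0}^{N-k} a_i^{(α)} f(x_{k+i})`. -/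
noncomputable def glFwdDiff (α h : ℝ) (N : ℕ) (f : ℕ → ℝ) (k : ℕ) : ℝ :=
  h ^ (-α) * ∑ i ∈ Finset.range (N - k + 1), acoef α i * f (k + i)

/-- `y` satisfies the discrete fractional Sturm–Liouville equation
`ₖΔ^α_N (p(x_k) ₀Δ^α_k y(x_k)) + q(x_k) y(x_k) = λ r(x_k) y(x_k)` for `k = 1, …, N-1`. -/
def SLSolves (α h : ℝ) (N : ℕ) (p q r : ℕ → ℝ) (lam : ℝ) (y : ℕ → ℝ) : Prop :=
  ∀ k, 1 ≤ k → k ≤ N - 1 →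
    glFwdDiff α h N (fun j => p j * glBackDiff α h y j) k + q k * y k = lam * (r k * y k)

/-- `(lam, y)` is an eigenpair of the discrete fractional Sturm–Liouville problem:
`y` is a nontrivial mesh function satisfying the equation together with the
boundary conditions `y(x_0) = y(x_N) = 0`. -/
def IsSLEigenpair (α h : ℝ) (N : ℕ) (p q r : ℕ → ℝ) (lam : ℝ) (y : ℕ → ℝ) : Prop :=
  y 0 = 0 ∧ y N = 0 ∧ (∃ k ≤ N, y k ≠ 0) ∧ SLSolves α h N p q r lam y

/-- The functional `J[y] = Σ_{k=1}^{N} [p(x_k) (₀Δ^α_k y(x_k))² + q(x_k) y(x_k)²]`. -/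
noncomputable def slJ (α h : ℝ) (N : ℕ) (p q : ℕ → ℝ) (y : ℕ → ℝ) : ℝ :=
  ∑ k ∈ Finset.Icc 1 N, (p k * (glBackDiff α h y k) ^ 2 + q k * (y k) ^ 2)

/-- The functional `I[y] = Σ_{k=1}^{N} r(x_k) y(x_k)²`. -/
noncomputable def slI (N : ℕ) (r : ℕ → ℝ) (y : ℕ → ℝ) : ℝ :=
  ∑ k ∈ Finset.Icc 1 N, r k * (y k) ^ 2

/-- Summation by parts: reindex the double sum over `i ≤ k ≤ N` by `(k, i) ↦ (k - i, i)`. -/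
lemma sum_mul_glBackDiff (α h : ℝ) (N : ℕ) (g y : ℕ → ℝ) :
    ∑ k ∈ Finset.range (N + 1), g k * glBackDiff α h y k =
      ∑ k ∈ Finset.range (N + 1), y k * glFwdDiff α h N g k := by
  unfold glBackDiff glFwdDiff
  simp only [Finset.mul_sum]
  rw [Finset.sum_sigma', Finset.sum_sigma']
  refine Finset.sum_bij' (fun s _ => ⟨s.1 - s.2, s.2⟩) (fun s _ => ⟨s.1 + s.2, s.2⟩)
    ?_ ?_ ?_ ?_ ?_
  · rintro ⟨k, i⟩ hs
    simp only [Finset.mem_sigma, Finset.mem_range] at hs ⊢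
    omega
  · rintro ⟨k, i⟩ hs
    simp only [Finset.mem_sigma, Finset.mem_range] at hs ⊢
    omega
  · rintro ⟨k, i⟩ hs
    simp only [Finset.mem_sigma, Finset.mem_range] at hs
    simp only [Nat.sub_add_cancel (show i ≤ k by omega)]
  · rintro ⟨k, i⟩ hs
    simp only [Nat.add_sub_cancel]
  · rintro ⟨k, i⟩ hs
    simp only [Finset.mem_sigma, Finset.mem_range] at hs
    simp only [Nat.sub_add_cancel (show i ≤ k by omega)]
    ring

/-- A mesh sum over `1, …, N` may start at `0` when the term at `0` vanishes. -/
lemma sum_Icc_one_eq_sum_range (N : ℕ) (f : ℕ → ℝ) (h0 : f 0 = 0) :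
    ∑ k ∈ Finset.Icc 1 N, f k = ∑ k ∈ Finset.range (N + 1), f k := by
  apply Finset.sum_subset
  · intro k hk
    simp only [Finset.mem_Icc, Finset.mem_range] at hk ⊢
    omega
  · intro k hk hk'
    simp only [Finset.mem_Icc, Finset.mem_range] at hk hk'
    obtain rfl : k = 0 := by omega
    exact h0

/-- the Rayleigh quotient `R[yⁱ] = J[yⁱ]/I[yⁱ]` of an eigenfunction `yⁱ`
of the discrete fractional Sturm–Liouville problem equals its eigenvalue `λ_i`. -/
theorem discrete_SL_rayleigh_eigenfunction (a : ℝ) (α h : ℝ)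
    (hα0 : 0 < α) (hα1 : α ≤ 1) (hh : 0 < h) (N : ℕ) (hN : 2 ≤ N) (p q r : ℕ → ℝ)
    (hp : ∀ i ≤ N, 0 < p i) (hr : ∀ i ≤ N, 0 < r i)
    (lami : ℝ) (yi : ℕ → ℝ)
    (hi : IsSLEigenpair α h N p q r lami yi) :
    slJ α h N p q yi / slI N r yi = lami := by
  obtain ⟨h0, hNz, ⟨m, hmN, hm⟩, hsol⟩ := hi
  have hback : glBackDiff α h yi 0 = 0 := by simp [glBackDiff, h0]
  have hI : slI N r yi = ∑ k ∈ Finset.range (N + 1), r k * yi k ^ 2 :=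
    sum_Icc_one_eq_sum_range N _ (by simp [h0])
  have hIpos : 0 < slI N r yi := by
    rw [hI]
    refine Finset.sum_pos' (fun k hk => ?_) ⟨m, Finset.mem_range.2 (by omega), ?_⟩
    · exact mul_nonneg (hr k (by simpa [Nat.lt_succ_iff] using hk)).le (sq_nonneg _)
    · exact mul_pos (hr m hmN) (by positivity)
  have hJ : slJ α h N p q yi = lami * slI N r yi := by
    have hparts := sum_mul_glBackDiff α h N (fun j => p j * glBackDiff α h yi j) yi
    have hJ' : slJ α h N p q yi = ∑ k ∈ Finset.range (N + 1),
        (p k * glBackDiff α h yi k ^ 2 + q k * yi k ^ 2) :=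
      sum_Icc_one_eq_sum_range N _ (by simp [h0, hback])
    have hsq : ∑ k ∈ Finset.range (N + 1), p k * glBackDiff α h yi k ^ 2 =
        ∑ k ∈ Finset.range (N + 1), p k * glBackDiff α h yi k * glBackDiff α h yi k :=
      Finset.sum_congr rfl fun k _ => by ring
    rw [hJ', hI, Finset.sum_add_distrib, hsq, hparts, ← Finset.sum_add_distrib, Finset.mul_sum]
    refine Finset.sum_congr rfl fun k hk => ?_
    rw [Finset.mem_range] at hk
    rcases Nat.eq_zero_or_pos k with rfl | hk0
    · simp [h0]
    rcases eq_or_ne k N with rfl | hkN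
    · simp [hNz]
    have heq := hsol k hk0 (by omega)
    linear_combination yi k * heq
  rw [hJ, mul_div_cancel_right₀ _ hIpos.ne']
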